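/- Let F be a nonabelian free group of rank 2 and let K be a normal subgroup of F that satisfies a group law. Then K is trivial. -/

import Mathlib

/-- Conjugating `of 0` by powers of the shift inside `FreeGroup ℤ ⋊ ℤ` yields all of the free
generators `of n`, so a free group of rank at least two satisfies no nontrivial law. -/
theorem IsFreeGroup.exists_lift_ne_one {G : Type*} [Group G] [IsFreeGroup G]
    [Nontrivial (IsFreeGroup.Generators G)] {α : Type*} [Countable α]
    {w : FreeGroup α} (hw : w ≠ 1) : ∃ f : α → G, FreeGroup.lift f w ≠ 1 := by
  classical
  obtain ⟨i, j, hij⟩ := exists_pair_ne (IsFreeGroup.Generators G)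
  obtain ⟨e, he⟩ := exists_injective_nat α
  let shift : MulAut (FreeGroup ℤ) := FreeGroup.freeGroupCongr (Equiv.addRight 1)
  have shift_zpow (n m : ℤ) : (shift ^ n) (FreeGroup.of m) = FreeGroup.of (m + n) := by
    induction n generalizing m with
    | zero => simp
    | succ n ih =>
      rw [zpow_add_one, MulAut.mul_apply]
      simp [shift] at ih ⊢
      rw [ih, add_right_comm, add_assoc]
    | pred n ih =>
      rw [zpow_sub_one, MulAut.mul_apply]
      have : shift⁻¹ (FreeGroup.of m) = FreeGroup.of (m - 1) := by
        rw [MulAut.inv_apply, MulEquiv.symm_apply_eq]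
        simp [shift]
      rw [this, ih]
      congr 1
      ring
  let φ : Multiplicative ℤ →* MulAut (FreeGroup ℤ) := zpowersHom _ shift
  let p : G →* FreeGroup ℤ ⋊[φ] Multiplicative ℤ := IsFreeGroup.lift fun k =>
    if k = i then SemidirectProduct.inl (FreeGroup.of 0)
    else SemidirectProduct.inr (Multiplicative.ofAdd 1)
  let a : G := IsFreeGroup.of i
  let b : G := IsFreeGroup.of j
  have hpa : p a = SemidirectProduct.inl (FreeGroup.of 0) := by simp [p, a]
  have hpb : p b = SemidirectProduct.inr (Multiplicative.ofAdd 1) := by simp [p, b, hij.symm]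
  refine ⟨fun k => b ^ (e k : ℤ) * a * (b ^ (e k : ℤ))⁻¹, fun h => hw ?_⟩
  have hcomp : p.comp (FreeGroup.lift fun k => b ^ (e k : ℤ) * a * (b ^ (e k : ℤ))⁻¹) =
      SemidirectProduct.inl.comp (FreeGroup.map fun k => (e k : ℤ)) := by
    ext1 k
    have := SemidirectProduct.inl_aut (φ := φ) (Multiplicative.ofAdd (e k : ℤ)) (FreeGroup.of 0)
    simp only [MonoidHom.comp_apply, FreeGroup.lift_apply_of, FreeGroup.map.of, map_mul, map_inv,
      map_zpow, hpa, hpb]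
    rw [← map_zpow, ← ofAdd_zsmul, smul_eq_mul, mul_one, ← map_inv, ← this]
    simp [φ, zpowersHom_apply, -zpow_natCast, shift_zpow]
  have hmap := DFunLike.congr_fun hcomp w
  rw [MonoidHom.comp_apply, h, map_one, MonoidHom.comp_apply, eq_comm,
    map_eq_one_iff _ SemidirectProduct.inl_injective] at hmap
  exact (map_eq_one_iff _ (FreeGroup.map_injective (Nat.cast_injective.comp he))).1 hmap

theorem IsFreeGroup.isCyclic_of_subsingleton_generators {G : Type*} [Group G] [IsFreeGroup G]
    [Subsingleton (IsFreeGroup.Generators G)] : IsCyclic G := by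
  have : IsCyclic (FreeGroup (IsFreeGroup.Generators G)) := by
    cases isEmpty_or_nonempty (IsFreeGroup.Generators G)
    · infer_instance
    · have := Classical.inhabited_of_nonempty ‹Nonempty (IsFreeGroup.Generators G)›
      have := Unique.mk' (IsFreeGroup.Generators G)
      infer_instance
  exact isCyclic_of_surjective _ (IsFreeGroup.mulEquiv G).surjective

theorem IsFreeGroup.isCyclic_of_forall_mul_comm {G : Type*} [Group G] [IsFreeGroup G]
    (hcomm : ∀ x y : G, x * y = y * x) : IsCyclic G := by
  classical
  have : Subsingleton (IsFreeGroup.Generators G) := by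
    by_contra h
    rw [not_subsingleton_iff_nontrivial] at h
    have hw :
        FreeGroup.of (0 : Fin 2) * FreeGroup.of 1 * (FreeGroup.of 0)⁻¹ * (FreeGroup.of 1)⁻¹ ≠ 1 := by
      decide
    obtain ⟨f, hf⟩ := IsFreeGroup.exists_lift_ne_one (G := G) hw
    apply hf
    rw [map_mul, map_mul, map_mul, map_inv, map_inv, hcomm (FreeGroup.lift f _),
      mul_inv_cancel_right, mul_inv_cancel]
  exact isCyclic_of_subsingleton_generators

theorem FreeGroup.exists_zpow_of_commute {α : Type*} {x y : FreeGroup α} (h : Commute x y) :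
    ∃ (c : FreeGroup α) (m n : ℤ), c ^ m = x ∧ c ^ n = y := by
  let H := Subgroup.closure {x, y}
  have hcomm : ∀ u v : H, u * v = v * u := by
    have := Subgroup.isMulCommutative_closure (k := {x, y}) (by
      rintro u (rfl | rfl) v (rfl | rfl)
      exacts [rfl, h.eq, h.eq.symm, rfl])
    exact fun u v => mul_comm' u v
  obtain ⟨c, hc⟩ := (IsFreeGroup.isCyclic_of_forall_mul_comm hcomm).exists_generator
  obtain ⟨m, hm⟩ := hc ⟨x, Subgroup.subset_closure (by simp)⟩
  obtain ⟨n, hn⟩ := hc ⟨y, Subgroup.subset_closure (by simp)⟩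
  exact ⟨c, m, n, by simpa using congrArg Subtype.val hm, by simpa using congrArg Subtype.val hn⟩

theorem FreeGroup.exists_zpow_eq_zpow_of_commute {α : Type*} {x y : FreeGroup α} (h : Commute x y)
    (hx : x ≠ 1) (hy : y ≠ 1) : ∃ m n : ℤ, m ≠ 0 ∧ n ≠ 0 ∧ x ^ m = y ^ n := by
  obtain ⟨c, m, n, rfl, rfl⟩ := exists_zpow_of_commute h
  refine ⟨n, m, ?_, ?_, zpow_comm c m n⟩ <;> rintro rfl <;> simp_all

theorem FreeGroup.eq_bot_of_normal_of_isCyclic {α : Type*} [Nontrivial α]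
    (K : Subgroup (FreeGroup α)) [K.Normal] [IsCyclic K] : K = ⊥ := by
  classical
  obtain ⟨⟨g, hgK⟩, hg⟩ := IsCyclic.exists_generator (α := K)
  have mem_iff : ∀ x ∈ K, ∃ n : ℤ, g ^ n = x := fun x hx => by
    obtain ⟨n, hn⟩ := hg ⟨x, hx⟩
    exact ⟨n, by simpa using congrArg Subtype.val hn⟩
  by_contra hK
  have hg1 : g ≠ 1 := by
    rintro rfl
    refine hK ((Subgroup.eq_bot_iff_forall K).2 fun x hx => ?_)
    obtain ⟨n, rfl⟩ := mem_iff x hx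
    simp
  have exists_zpow (x : FreeGroup α) (hx : x ≠ 1) :
      ∃ m n : ℤ, m ≠ 0 ∧ n ≠ 0 ∧ x ^ m = g ^ n := by
    obtain ⟨m, hm⟩ := mem_iff _ (Subgroup.Normal.conj_mem ‹_› g hgK x)
    obtain ⟨n, hn⟩ := mem_iff _ (Subgroup.Normal.conj_mem ‹_› g hgK x⁻¹)
    have hmn : g ^ (n * m) = g ^ (1 : ℤ) := by
      rw [zpow_mul, hn, conj_zpow, hm]
      group
    have hunit : n * m = 1 := injective_zpow_iff_not_isOfFinOrder.2 (by rwa [isOfFinOrder_iff_eq_one]) hmn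
    have hmm : m * m = 1 := by
      rcases Int.eq_one_or_neg_one_of_mul_eq_one (mul_comm n m ▸ hunit) with rfl | rfl <;> rfl
    have hcomm : Commute (x ^ 2) g := by
      have : x * (x * g * x⁻¹) * x⁻¹ = g := by
        rw [← hm, ← conj_zpow, ← hm, ← zpow_mul, hmm, zpow_one]
      rw [commute_iff_eq, pow_two]
      nth_rewrite 2 [← this]
      group
    obtain ⟨k, l, hk, hl, hkl⟩ := exists_zpow_eq_zpow_of_commute hcomm
      (by simpa using hx) hg1
    exact ⟨2 * k, l, by simpa using hk, hl, by rw [zpow_mul]; exact_mod_cast hkl⟩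
  obtain ⟨i, j, hij⟩ := exists_pair_ne α
  obtain ⟨m, n, hm, -, hmn⟩ := exists_zpow (of i) (of_ne_one i)
  obtain ⟨k, l, -, hl, hkl⟩ := exists_zpow (of j) (of_ne_one j)
  have heq : (of i : FreeGroup α) ^ (m * l) = of j ^ (k * n) := by
    rw [zpow_mul, hmn, zpow_mul, hkl, zpow_comm]
  have := congrArg (lift fun t => if t = i then Multiplicative.ofAdd (1 : ℤ) else 1) heq
  simp only [map_zpow, lift_apply_of, if_true, if_neg hij.symm, one_zpow] at this
  rw [← ofAdd_zsmul, ofAdd_eq_one, smul_eq_mul, mul_one] at this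
  exact mul_ne_zero hm hl this

/-- A normal subgroup of the free group of rank 2 that satisfies a
nontrivial group law is trivial. -/
theorem normal_law_subgroup_free2_trivial
    (K : Subgroup (FreeGroup (Fin 2))) [K.Normal]
    {r : ℕ} (w : FreeGroup (Fin r)) (hw : w ≠ 1)
    (hK : ∀ f : Fin r → FreeGroup (Fin 2), (∀ i, f i ∈ K) →
      FreeGroup.lift f w = 1) :
    K = ⊥ := by
  have : Subsingleton (IsFreeGroup.Generators K) := by
    by_contra h
    rw [not_subsingleton_iff_nontrivial] at h
    obtain ⟨f, hf⟩ := IsFreeGroup.exists_lift_ne_one (G := K) hw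
    refine hf (Subtype.val_injective ?_)
    have hcomp : K.subtype.comp (FreeGroup.lift f) =
        FreeGroup.lift fun i => (f i : FreeGroup _) := by
      ext1 i
      simp
    exact (DFunLike.congr_fun hcomp w).trans (hK _ fun i => (f i).2)
  have := IsFreeGroup.isCyclic_of_subsingleton_generators (G := K)
  exact FreeGroup.eq_bot_of_normal_of_isCyclic K
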